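/- Let Γ and Γ' be finite connected loopless multigraphs, each with at least one edge, let w be a weight on Γ, and let φ : Γ → Γ' be a w-harmonic morphism. Then b1(Γ') ≤ b1(Γ), where b1 denotes the first Betti number. -/

import Mathlib

open Finset

/-- A finite loopless connected multigraph: vertices `V`, edges `E`, each edge incident
to an unordered pair of distinct vertices. -/
structure Multigraph (V E : Type) [Fintype V] [Fintype E] where
  inc : E → Sym2 V
  loopless : ∀ e, ¬ (inc e).IsDiag
  connected : (SimpleGraph.fromRel fun u v => ∃ e, inc e = s(u, v)).Connected

variable {V E V' E' : Type} [Fintype V] [Fintype E] [Fintype V'] [Fintype E']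
  [DecidableEq V] [DecidableEq E] [DecidableEq V'] [DecidableEq E']

/-- The degree of a vertex: the number of edges incident to it. -/
def Multigraph.deg (G : Multigraph V E) (v : V) : ℤ :=
  ((univ.filter fun e => v ∈ G.inc e).card : ℤ)

/-- The first Betti number `#E - #V + 1` of a connected graph. -/
def Multigraph.b1 (G : Multigraph V E) : ℤ :=
  (Fintype.card E : ℤ) - (Fintype.card V : ℤ) + 1

/-- The canonical divisor `K_Γ(v) = deg v - 2`. -/
def Multigraph.K (G : Multigraph V E) : V → ℤ := fun v => G.deg v - 2

/-- A morphism of multigraphs: maps on vertices and edges compatible with incidence. -/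
structure GraphHom (G : Multigraph V E) (G' : Multigraph V' E') where
  vmap : V → V'
  emap : E → E'
  compat : ∀ e : E, Sym2.map vmap (G.inc e) = G'.inc (emap e)

/-- `localDeg G G' φ w v e'` is `Σ_{e incident to v, φ(e) = e'} w(e)`. -/
def localDeg (G : Multigraph V E) (G' : Multigraph V' E') (φ : GraphHom G G')
    (w : E → ℤ) (v : V) (e' : E') : ℤ :=
  ∑ e ∈ univ.filter (fun e => v ∈ G.inc e ∧ φ.emap e = e'), w e

/-!
A harmonic morphism with positive weights is locally surjective: every edge at `φ v` lifts to an
edge at `v`. For a locally surjective morphism the pullback `H¹(Γ') → H¹(Γ)` is injective: if the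
pullback of a cochain `f` is the coboundary of `g`, then `f` is the coboundary of the function
`v' ↦ max {g v | φ v = v'}`. Indeed, lifting an edge `a' → b'` at a point of the fibre over `a'`
where `g` is maximal shows that the potential grows by at least `f` along the edge, and lifting it
at such a point of the fibre over `b'` shows that it grows by at most `f`. Finally
`dim H¹(Γ) = #E - (#V - 1) = b₁(Γ)`.
-/

theorem exists_rightInverse_forall_le_of_surjective {α β γ : Type*} [Finite α] [LinearOrder γ]
    {p : α → β} (hp : Function.Surjective p) (g : α → γ) :
    ∃ m : β → α, Function.RightInverse m p ∧ ∀ a, g a ≤ g (m (p a)) := by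
  have exists_max (b : β) : ∃ m, p m = b ∧ ∀ a, p a = b → g a ≤ g m :=
    Set.exists_max_image (p ⁻¹' {b}) g (Set.toFinite _) (hp b)
  choose m hpm hmax using exists_max
  exact ⟨m, hpm, fun a => hmax (p a) a rfl⟩

namespace Multigraph

omit [DecidableEq V] [DecidableEq E]

theorem induction_on_edges (G : Multigraph V E) {P : V → Prop} {u : V} (base : P u)
    (step : ∀ e a b, G.inc e = s(a, b) → P a → P b) (v : V) : P v := by
  have reach := (SimpleGraph.reachable_iff_reflTransGen u v).1 (G.connected.preconnected u v)
  induction reach with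
  | refl => exact base
  | tail _ hadj ih =>
    rcases ((SimpleGraph.fromRel_adj _ _ _).1 hadj).2 with ⟨e, he⟩ | ⟨e, he⟩
    · exact step e _ _ he ih
    · exact step e _ _ (he.trans Sym2.eq_swap) ih

theorem exists_mem_inc [Nonempty E] (G : Multigraph V E) (v : V) : ∃ e, v ∈ G.inc e := by
  obtain ⟨e₀⟩ := ‹Nonempty E›
  refine G.induction_on_edges (P := fun u => ∃ e, u ∈ G.inc e)
    ⟨e₀, Sym2.out_fst_mem (G.inc e₀)⟩ (fun e a b he _ => ?_) v
  exact ⟨e, he ▸ Sym2.mem_mk_right a b⟩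

/-- An orientation of a multigraph: a choice of source and target for every edge. It allows
1-cochains to be encoded as plain functions on the edge set. -/
structure Orientation (G : Multigraph V E) where
  src : E → V
  tgt : E → V
  inc_eq : ∀ e, G.inc e = s(src e, tgt e)

instance (G : Multigraph V E) : Nonempty G.Orientation :=
  ⟨⟨fun e => (G.inc e).out.1, fun e => (G.inc e).out.2, fun e => (Quot.out_eq (G.inc e)).symm⟩⟩

namespace Orientation

variable {G : Multigraph V E} (o : G.Orientation)

theorem src_ne_tgt (e : E) : o.src e ≠ o.tgt e := fun h =>
  G.loopless e (by rw [o.inc_eq, Sym2.mk_isDiag_iff]; exact h)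

/-- The simplicial coboundary map from 0-cochains to 1-cochains, with respect to an
orientation. -/
def coboundary (R : Type*) [Ring R] : (V → R) →ₗ[R] (E → R) :=
  LinearMap.funLeft R R o.tgt - LinearMap.funLeft R R o.src

theorem coboundary_apply {R : Type*} [Ring R] (g : V → R) (e : E) :
    o.coboundary R g e = g (o.tgt e) - g (o.src e) :=
  rfl

theorem mem_ker_coboundary_iff {R : Type*} [Ring R] {g : V → R} :
    g ∈ LinearMap.ker (o.coboundary R) ↔ ∀ u v, g u = g v := by
  rw [LinearMap.mem_ker]
  constructor
  · intro hg u v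
    have eq_on_edge (e : E) : g (o.tgt e) = g (o.src e) := sub_eq_zero.1 (congrFun hg e)
    refine G.induction_on_edges (P := fun x => g x = g v) rfl (fun e a b he ha => ?_) u
    rw [o.inc_eq, Sym2.eq_iff] at he
    rcases he with ⟨rfl, rfl⟩ | ⟨rfl, rfl⟩
    · exact (eq_on_edge e).trans ha
    · exact (eq_on_edge e).symm.trans ha
  · exact fun hg => funext fun e => sub_eq_zero.2 (hg _ _)

theorem ker_coboundary (R : Type*) [Ring R] :
    LinearMap.ker (o.coboundary R) = Submodule.span R {(1 : V → R)} := by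
  ext g
  rw [mem_ker_coboundary_iff, Submodule.mem_span_singleton]
  constructor
  · obtain ⟨v₀⟩ := G.connected.nonempty
    exact fun hg => ⟨g v₀, funext fun v => by simp [hg v v₀]⟩
  · rintro ⟨c, rfl⟩ _ _
    rfl

/-- The first cohomology of a multigraph: 1-cochains modulo coboundaries. A graph has no 2-cells,
so every 1-cochain is a cocycle. -/
abbrev H1 (R : Type*) [Ring R] : Type _ :=
  (E → R) ⧸ LinearMap.range (o.coboundary R)

theorem finrank_H1 (K : Type*) [Field K] : (Module.finrank K (o.H1 K) : ℤ) = G.b1 := by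
  have : Nonempty V := G.connected.nonempty
  have finrank_ker : Module.finrank K (LinearMap.ker (o.coboundary K)) = 1 := by
    rw [ker_coboundary, finrank_span_singleton one_ne_zero]
  have rank_nullity := LinearMap.finrank_range_add_finrank_ker (o.coboundary K)
  have finrank_quotient := (LinearMap.range (o.coboundary K)).finrank_quotient_add_finrank
  rw [Module.finrank_fintype_fun_eq_card] at rank_nullity finrank_quotient
  unfold b1
  lia

end Orientation

end Multigraph

namespace GraphHom

variable {G : Multigraph V E} {G' : Multigraph V' E'} {φ : GraphHom G G'}

section LocallySurjective

omit [DecidableEq V] [DecidableEq E] [DecidableEq V'] [DecidableEq E']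

theorem vmap_mem_inc (φ : GraphHom G G') {v : V} {e : E} (hv : v ∈ G.inc e) :
    φ.vmap v ∈ G'.inc (φ.emap e) :=
  φ.compat e ▸ Sym2.mem_map.2 ⟨v, hv, rfl⟩

/-- A morphism is locally surjective if every edge at the image of a vertex `v` lifts to an edge
at `v`. -/
def IsLocallySurjective (φ : GraphHom G G') : Prop :=
  ∀ v e', φ.vmap v ∈ G'.inc e' → ∃ e, v ∈ G.inc e ∧ φ.emap e = e'

theorem IsLocallySurjective.vmap_surjective (hφ : φ.IsLocallySurjective) :
    Function.Surjective φ.vmap := by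
  obtain ⟨v₀⟩ := G.connected.nonempty
  refine G'.induction_on_edges ⟨v₀, rfl⟩ ?_
  rintro e' _ b he' ⟨v, rfl⟩
  obtain ⟨e, -, rfl⟩ := hφ v e' (he' ▸ Sym2.mem_mk_left _ b)
  have hb : b ∈ Sym2.map φ.vmap (G.inc e) := by
    rw [φ.compat, he']
    exact Sym2.mem_mk_right _ b
  obtain ⟨u, -, hu⟩ := Sym2.mem_map.1 hb
  exact ⟨u, hu⟩

/-- Compatibility of a morphism with orientations of its domain and codomain: it sends sources to
sources and targets to targets. -/
structure PreservesOrientation (φ : GraphHom G G') (o : G.Orientation) (o' : G'.Orientation) :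
    Prop where
  vmap_src : ∀ e, φ.vmap (o.src e) = o'.src (φ.emap e)
  vmap_tgt : ∀ e, φ.vmap (o.tgt e) = o'.tgt (φ.emap e)

theorem exists_preservesOrientation (φ : GraphHom G G') (o' : G'.Orientation) :
    ∃ o : G.Orientation, φ.PreservesOrientation o o' := by
  have exists_ends (e : E) : ∃ a b, G.inc e = s(a, b) ∧
      φ.vmap a = o'.src (φ.emap e) ∧ φ.vmap b = o'.tgt (φ.emap e) := by
    have hcompat := φ.compat e
    induction hinc : G.inc e with
    | _ a b =>
      rw [hinc, o'.inc_eq, Sym2.map_mk, Sym2.eq_iff] at hcompat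
      rcases hcompat with ⟨ha, hb⟩ | ⟨ha, hb⟩
      · exact ⟨a, b, rfl, ha, hb⟩
      · exact ⟨b, a, Sym2.eq_swap, hb, ha⟩
  choose src tgt inc_eq vmap_src vmap_tgt using exists_ends
  exact ⟨⟨src, tgt, inc_eq⟩, vmap_src, vmap_tgt⟩

variable {o : G.Orientation} {o' : G'.Orientation}

namespace PreservesOrientation

theorem exists_src_eq (ho : φ.PreservesOrientation o o') (hφ : φ.IsLocallySurjective) {v : V}
    {e' : E'} (hv : φ.vmap v = o'.src e') : ∃ e, φ.emap e = e' ∧ o.src e = v := by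
  obtain ⟨e, hve, rfl⟩ := hφ v e' (by simp [hv, o'.inc_eq])
  rw [o.inc_eq, Sym2.mem_iff] at hve
  rcases hve with rfl | rfl
  · exact ⟨e, rfl, rfl⟩
  · exact absurd (hv.symm.trans (ho.vmap_tgt e)) (o'.src_ne_tgt _)

theorem exists_tgt_eq (ho : φ.PreservesOrientation o o') (hφ : φ.IsLocallySurjective) {v : V}
    {e' : E'} (hv : φ.vmap v = o'.tgt e') : ∃ e, φ.emap e = e' ∧ o.tgt e = v := by
  obtain ⟨e, hve, rfl⟩ := hφ v e' (by simp [hv, o'.inc_eq])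
  rw [o.inc_eq, Sym2.mem_iff] at hve
  rcases hve with rfl | rfl
  · exact absurd ((ho.vmap_src e).symm.trans hv) (o'.src_ne_tgt _)
  · exact ⟨e, rfl, rfl⟩

theorem coboundary_comp_vmap {R : Type*} [Ring R] (ho : φ.PreservesOrientation o o')
    (g : V' → R) : o.coboundary R (g ∘ φ.vmap) = o'.coboundary R g ∘ φ.emap := by
  ext e
  simp only [Multigraph.Orientation.coboundary_apply, Function.comp_apply, ho.vmap_src,
    ho.vmap_tgt]

theorem mem_range_coboundary_of_comp_emap {R : Type*} [Ring R] [LinearOrder R]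
    [IsOrderedAddMonoid R] (ho : φ.PreservesOrientation o o') (hφ : φ.IsLocallySurjective)
    {f : E' → R} (hf : f ∘ φ.emap ∈ LinearMap.range (o.coboundary R)) :
    f ∈ LinearMap.range (o'.coboundary R) := by
  obtain ⟨g, hg⟩ := hf
  have coboundary_g (e : E) : g (o.tgt e) - g (o.src e) = f (φ.emap e) := congrFun hg e
  obtain ⟨m, hm, hmax⟩ := exists_rightInverse_forall_le_of_surjective hφ.vmap_surjective g
  refine ⟨g ∘ m, funext fun e' => le_antisymm ?_ ?_⟩ <;>
    rw [Multigraph.Orientation.coboundary_apply, Function.comp_apply, Function.comp_apply]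
  · obtain ⟨e, rfl, htgt⟩ := ho.exists_tgt_eq hφ (hm (o'.tgt e'))
    rw [← htgt, ← coboundary_g, ← ho.vmap_src]
    exact sub_le_sub_left (hmax _) _
  · obtain ⟨e, rfl, hsrc⟩ := ho.exists_src_eq hφ (hm (o'.src e'))
    rw [← hsrc, ← coboundary_g, ← ho.vmap_tgt]
    exact sub_le_sub_right (hmax _) _

/-- The map on first cohomology induced by a morphism, given by precomposition with the map on
edges. -/
def pullbackH1 (ho : φ.PreservesOrientation o o') (R : Type*) [Ring R] : o'.H1 R →ₗ[R] o.H1 R :=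
  Submodule.mapQ _ _ (LinearMap.funLeft R R φ.emap) <| by
    rintro _ ⟨g, rfl⟩
    exact ⟨g ∘ φ.vmap, ho.coboundary_comp_vmap g⟩

theorem pullbackH1_injective (ho : φ.PreservesOrientation o o') (hφ : φ.IsLocallySurjective)
    (R : Type*) [Ring R] [LinearOrder R] [IsOrderedAddMonoid R] :
    Function.Injective (ho.pullbackH1 R) := by
  rw [injective_iff_map_eq_zero]
  rintro ⟨f⟩ hf
  exact (Submodule.Quotient.mk_eq_zero _).2 <|
    ho.mem_range_coboundary_of_comp_emap hφ ((Submodule.Quotient.mk_eq_zero _).1 hf)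

end PreservesOrientation

end LocallySurjective

section Harmonic

omit [DecidableEq V'] [DecidableEq E]

theorem localDeg_pos_iff {w : E → ℤ} (hw : ∀ e, 0 < w e) {v : V} {e' : E'} :
    0 < localDeg G G' φ w v e' ↔ ∃ e, v ∈ G.inc e ∧ φ.emap e = e' := by
  simp [localDeg, Finset.sum_pos_iff_of_nonneg fun e _ => (hw e).le, hw]

/-- A morphism is `w`-harmonic if the weighted number of lifts at `v` of an edge `e'` at `φ v` does
not depend on `e'`. -/
def IsHarmonic (φ : GraphHom G G') (w : E → ℤ) : Prop :=
  ∀ (v : V) (e₁ e₂ : E'), φ.vmap v ∈ G'.inc e₁ → φ.vmap v ∈ G'.inc e₂ →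
    localDeg G G' φ w v e₁ = localDeg G G' φ w v e₂

theorem IsHarmonic.isLocallySurjective [Nonempty E] {w : E → ℤ} (hφ : φ.IsHarmonic w)
    (hw : ∀ e, 0 < w e) : φ.IsLocallySurjective := by
  intro v e' he'
  obtain ⟨e, he⟩ := G.exists_mem_inc v
  rw [← localDeg_pos_iff hw, hφ v e' (φ.emap e) he' (φ.vmap_mem_inc he), localDeg_pos_iff hw]
  exact ⟨e, he, rfl⟩

end Harmonic

end GraphHom

omit [DecidableEq V] [DecidableEq E] [DecidableEq V'] [DecidableEq E'] in
theorem betti_number_le_general {G : Multigraph V E} {G' : Multigraph V' E'} {φ : GraphHom G G'}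
    (hφ : φ.IsLocallySurjective) : G'.b1 ≤ G.b1 := by
  obtain ⟨o'⟩ : Nonempty G'.Orientation := inferInstance
  obtain ⟨o, ho⟩ := φ.exists_preservesOrientation o'
  rw [← o'.finrank_H1 ℚ, ← o.finrank_H1 ℚ, Nat.cast_le]
  exact LinearMap.finrank_le_finrank_of_injective (ho.pullbackH1_injective hφ ℚ)

/-- For a `w`-harmonic morphism `φ : Γ → Γ'` of finite connected loopless
multigraphs, each with at least one edge, one has `b1(Γ') ≤ b1(Γ)`. -/
theorem betti_number_le
    (G : Multigraph V E) (G' : Multigraph V' E') (φ : GraphHom G G')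
    (w : E → ℤ) (hw : ∀ e, 0 < w e)
    (hharm : ∀ (v : V) (e₁ e₂ : E'), φ.vmap v ∈ G'.inc e₁ → φ.vmap v ∈ G'.inc e₂ →
      localDeg G G' φ w v e₁ = localDeg G G' φ w v e₂)
    (hE : Nonempty E) (hE' : Nonempty E') :
    G'.b1 ≤ G.b1 :=
  betti_number_le_general (GraphHom.IsHarmonic.isLocallySurjective hharm hw)
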